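/- Logarithmic derivative identity at fixed φ: let (φ, β₁) ∈ D, let u(t) = U(φ, t) and v(t) = V(φ, t) as functions of the second variable t near β₁, and set X = 3φ − 1, Y = 3φ − β₁, R = (Y/X)·V(φ, β₁) − 1. Then R > 0 and u′(β₁)/u(β₁) − v′(β₁)/v(β₁) = −v′(β₁)/(v(β₁)·(v(β₁) − 1)) · R. -/

import Mathlib

/-- `U(φ, β₁) = 9(1−φ)β₃/(Y β₂)` where `β₂ = 3(1−φ) − 2β₁`, `β₃ = β₁ − 2 + 3φ`,
`Y = 3φ − β₁`. -/
noncomputable def Ufun (φ β₁ : ℝ) : ℝ :=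
  9 * (1 - φ) * (β₁ - 2 + 3 * φ) / ((3 * φ - β₁) * (3 * (1 - φ) - 2 * β₁))

/-- `V(φ, β₁) = 1 + β₂²/(3 Y β₃)`. -/
noncomputable def Vfun (φ β₁ : ℝ) : ℝ :=
  1 + (3 * (1 - φ) - 2 * β₁) ^ 2 / (3 * (3 * φ - β₁) * (β₁ - 2 + 3 * φ))

/-- The constraint polygon `D` for the pair `(φ, β₁)`. -/
def Dset : Set (ℝ × ℝ) :=
  {q | 0.525245 ≤ q.1 ∧ q.1 ≤ 0.619063 ∧ 0.33018 ≤ q.2 ∧ q.2 ≤ 0.52891 ∧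
    0.33018 ≤ 3 * (1 - q.1) - 2 * q.2 ∧ 3 * (1 - q.1) - 2 * q.2 ≤ 0.52891 ∧
    0.077639 ≤ q.2 - 2 + 3 * q.1 ∧ q.2 - 2 + 3 * q.1 ≤ 0.21782}

/-!
Since `X = β₂ + 2β₃` and `Y = 2β₂ + 3β₃`, both are combinations of `β₂` and `β₃`.
The logarithmic derivatives of `U` and `V − 1` in `β₁` then share the factor
`2(β₂ + 3β₃)/(Y β₂ β₃)`, with cofactors `β₂ + β₃ = Y − X` and `−X` respectively. Hence
`u′/u = −(v′/(v − 1)) (Y/X − 1)`, and subtracting `v′/v` gives the identity. Finally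
`R = (β₂² + 3β₂β₃ + 3β₃²)/(3β₃X)`, whose numerator is a positive definite quadratic form.
-/

/-- The parameter `β₂ = 3(1−φ) − 2β₁`, as a function of `(φ, β₁)`. -/
noncomputable def beta₂ (φ β₁ : ℝ) : ℝ :=
  3 * (1 - φ) - 2 * β₁

/-- The parameter `β₃ = β₁ − 2 + 3φ`, as a function of `(φ, β₁)`. -/
noncomputable def beta₃ (φ β₁ : ℝ) : ℝ :=
  β₁ - 2 + 3 * φ

/-- The quantity `X = 3φ − 1`. -/
noncomputable def Xfun (φ : ℝ) : ℝ :=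
  3 * φ - 1

/-- The quantity `Y = 3φ − β₁`, as a function of `(φ, β₁)`. -/
noncomputable def Yfun (φ β₁ : ℝ) : ℝ :=
  3 * φ - β₁

section LogDeriv

variable {𝕜 𝕜' : Type*} [NontriviallyNormedField 𝕜] [NontriviallyNormedField 𝕜']
  [NormedAlgebra 𝕜 𝕜']

theorem logDeriv_sub_logDeriv_of_eq_neg_logDeriv_sub_one_mul {u v : 𝕜 → 𝕜'} {x : 𝕜} {q : 𝕜'}
    (hv₀ : v x ≠ 0) (hv₁ : v x ≠ 1)
    (hu : logDeriv u x = -logDeriv (fun t => v t - 1) x * (q - 1)) :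
    logDeriv u x - logDeriv v x = -deriv v x / (v x * (v x - 1)) * (q * v x - 1) := by
  have hw : v x - 1 ≠ 0 := sub_ne_zero.2 hv₁
  rw [hu, logDeriv_apply, logDeriv_apply, deriv_sub_const]
  field_simp
  ring

end LogDeriv

section Parameters

variable (φ β₁ : ℝ)

theorem Xfun_eq_beta : Xfun φ = beta₂ φ β₁ + 2 * beta₃ φ β₁ := by
  unfold Xfun beta₂ beta₃
  ring

theorem Yfun_eq_beta : Yfun φ β₁ = 2 * beta₂ φ β₁ + 3 * beta₃ φ β₁ := by
  unfold Yfun beta₂ beta₃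
  ring

theorem hasDerivAt_beta₂ : HasDerivAt (beta₂ φ) (-2) β₁ := by
  rw [← mul_one (2 : ℝ)]
  exact ((hasDerivAt_id β₁).const_mul 2).const_sub (3 * (1 - φ))

theorem hasDerivAt_beta₃ : HasDerivAt (beta₃ φ) 1 β₁ :=
  ((hasDerivAt_id β₁).sub_const 2).add_const (3 * φ)

theorem hasDerivAt_Yfun : HasDerivAt (Yfun φ) (-1) β₁ :=
  (hasDerivAt_id β₁).const_sub (3 * φ)

theorem logDeriv_beta₂ : logDeriv (beta₂ φ) β₁ = -2 / beta₂ φ β₁ := by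
  rw [logDeriv_apply, (hasDerivAt_beta₂ φ β₁).deriv]

theorem logDeriv_beta₃ : logDeriv (beta₃ φ) β₁ = 1 / beta₃ φ β₁ := by
  rw [logDeriv_apply, (hasDerivAt_beta₃ φ β₁).deriv]

theorem logDeriv_Yfun : logDeriv (Yfun φ) β₁ = -1 / Yfun φ β₁ := by
  rw [logDeriv_apply, (hasDerivAt_Yfun φ β₁).deriv]

theorem Vfun_sub_one :
    Vfun φ β₁ - 1 = beta₂ φ β₁ ^ 2 / (3 * Yfun φ β₁ * beta₃ φ β₁) :=
  add_sub_cancel_left _ _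

end Parameters

section Identity

variable {φ β₁ : ℝ}

theorem logDeriv_Ufun (hφ : φ ≠ 1) (hβ₂ : beta₂ φ β₁ ≠ 0) (hβ₃ : beta₃ φ β₁ ≠ 0)
    (hY : Yfun φ β₁ ≠ 0) :
    logDeriv (Ufun φ) β₁ =
      2 * (beta₂ φ β₁ + beta₃ φ β₁) * (beta₂ φ β₁ + 3 * beta₃ φ β₁) /
        (Yfun φ β₁ * beta₂ φ β₁ * beta₃ φ β₁) := by
  have hc : 9 * (1 - φ) ≠ 0 := mul_ne_zero (by norm_num) (sub_ne_zero.2 hφ.symm)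
  have d₂ := (hasDerivAt_beta₂ φ β₁).differentiableAt
  have d₃ := (hasDerivAt_beta₃ φ β₁).differentiableAt
  have dY := (hasDerivAt_Yfun φ β₁).differentiableAt
  calc logDeriv (Ufun φ) β₁
      = logDeriv (fun t => 9 * (1 - φ) * beta₃ φ t) β₁ -
          logDeriv (fun t => Yfun φ t * beta₂ φ t) β₁ :=
        logDeriv_div β₁ (mul_ne_zero hc hβ₃) (mul_ne_zero hY hβ₂) (d₃.const_mul _)
          (dY.fun_mul d₂)
    _ = logDeriv (beta₃ φ) β₁ - (logDeriv (Yfun φ) β₁ + logDeriv (beta₂ φ) β₁) := by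
        rw [logDeriv_const_mul _ _ hc, logDeriv_mul β₁ hY hβ₂ dY d₂]
    _ = _ := by
        rw [logDeriv_beta₂, logDeriv_beta₃, logDeriv_Yfun]
        field_simp
        rw [Yfun_eq_beta]
        ring

theorem logDeriv_Vfun_sub_one (hβ₂ : beta₂ φ β₁ ≠ 0) (hβ₃ : beta₃ φ β₁ ≠ 0)
    (hY : Yfun φ β₁ ≠ 0) :
    logDeriv (fun t => Vfun φ t - 1) β₁ =
      -(2 * Xfun φ * (beta₂ φ β₁ + 3 * beta₃ φ β₁) /
        (Yfun φ β₁ * beta₂ φ β₁ * beta₃ φ β₁)) := by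
  have d₂ := (hasDerivAt_beta₂ φ β₁).differentiableAt
  have d₃ := (hasDerivAt_beta₃ φ β₁).differentiableAt
  have dY := (hasDerivAt_Yfun φ β₁).differentiableAt
  have h3Y : 3 * Yfun φ β₁ ≠ 0 := mul_ne_zero three_ne_zero hY
  calc logDeriv (fun t => Vfun φ t - 1) β₁
      = logDeriv (fun t => beta₂ φ t ^ 2 / (3 * Yfun φ t * beta₃ φ t)) β₁ := by
        simp_rw [Vfun_sub_one φ]
    _ = logDeriv (fun t => beta₂ φ t ^ 2) β₁ -
          logDeriv (fun t => 3 * Yfun φ t * beta₃ φ t) β₁ :=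
        logDeriv_div β₁ (pow_ne_zero 2 hβ₂) (mul_ne_zero h3Y hβ₃) (d₂.fun_pow 2)
          ((dY.const_mul 3).fun_mul d₃)
    _ = 2 * logDeriv (beta₂ φ) β₁ - (logDeriv (Yfun φ) β₁ + logDeriv (beta₃ φ) β₁) := by
        rw [logDeriv_fun_pow d₂, logDeriv_mul β₁ h3Y hβ₃ (dY.const_mul 3) d₃,
          logDeriv_const_mul _ _ three_ne_zero, Nat.cast_ofNat]
    _ = _ := by
        rw [logDeriv_beta₂, logDeriv_beta₃, logDeriv_Yfun]
        field_simp
        rw [Xfun_eq_beta φ β₁, Yfun_eq_beta]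
        ring

theorem logDeriv_Ufun_eq_neg_logDeriv_Vfun_sub_one_mul (hφ : φ ≠ 1) (hX : Xfun φ ≠ 0)
    (hβ₂ : beta₂ φ β₁ ≠ 0) (hβ₃ : beta₃ φ β₁ ≠ 0) (hY : Yfun φ β₁ ≠ 0) :
    logDeriv (Ufun φ) β₁ =
      -logDeriv (fun t => Vfun φ t - 1) β₁ * (Yfun φ β₁ / Xfun φ - 1) := by
  have hYX : Yfun φ β₁ / Xfun φ - 1 = (beta₂ φ β₁ + beta₃ φ β₁) / Xfun φ := by
    rw [div_sub_one hX, Yfun_eq_beta, Xfun_eq_beta φ β₁]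
    ring
  rw [logDeriv_Ufun hφ hβ₂ hβ₃ hY, logDeriv_Vfun_sub_one hβ₂ hβ₃ hY, hYX]
  field_simp

theorem Yfun_div_Xfun_mul_Vfun_sub_one (hX : Xfun φ ≠ 0) (hβ₃ : beta₃ φ β₁ ≠ 0)
    (hY : Yfun φ β₁ ≠ 0) :
    Yfun φ β₁ / Xfun φ * Vfun φ β₁ - 1 =
      (beta₂ φ β₁ ^ 2 + 3 * beta₂ φ β₁ * beta₃ φ β₁ + 3 * beta₃ φ β₁ ^ 2) /
        (3 * (beta₃ φ β₁ * Xfun φ)) := by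
  rw [sub_eq_iff_eq_add.1 (Vfun_sub_one φ β₁)]
  field_simp
  rw [Yfun_eq_beta, Xfun_eq_beta φ β₁]
  ring

theorem Yfun_div_Xfun_mul_Vfun_sub_one_pos (hY : Yfun φ β₁ ≠ 0)
    (hβ₃X : 0 < beta₃ φ β₁ * Xfun φ) : 0 < Yfun φ β₁ / Xfun φ * Vfun φ β₁ - 1 := by
  have hβ₃ : beta₃ φ β₁ ≠ 0 := left_ne_zero_of_mul hβ₃X.ne'
  have hX : Xfun φ ≠ 0 := right_ne_zero_of_mul hβ₃X.ne'
  rw [Yfun_div_Xfun_mul_Vfun_sub_one hX hβ₃ hY]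
  have hnum_pos : 0 < beta₂ φ β₁ ^ 2 + 3 * beta₂ φ β₁ * beta₃ φ β₁ + 3 * beta₃ φ β₁ ^ 2 := by
    nlinarith [sq_nonneg (2 * beta₂ φ β₁ + 3 * beta₃ φ β₁), sq_pos_of_ne_zero hβ₃]
  positivity

theorem log_deriv_identity_fixed_phi_general (hφ : φ ≠ 1) (hβ₂ : beta₂ φ β₁ ≠ 0)
    (hY : Yfun φ β₁ ≠ 0) (hβ₃X : 0 < beta₃ φ β₁ * Xfun φ) :
    0 < Yfun φ β₁ / Xfun φ * Vfun φ β₁ - 1 ∧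
      deriv (fun t => Ufun φ t) β₁ / Ufun φ β₁ - deriv (fun t => Vfun φ t) β₁ / Vfun φ β₁ =
        -(deriv (fun t => Vfun φ t) β₁) / (Vfun φ β₁ * (Vfun φ β₁ - 1)) *
          (Yfun φ β₁ / Xfun φ * Vfun φ β₁ - 1) := by
  have hβ₃ : beta₃ φ β₁ ≠ 0 := left_ne_zero_of_mul hβ₃X.ne'
  have hX : Xfun φ ≠ 0 := right_ne_zero_of_mul hβ₃X.ne'
  have hR := Yfun_div_Xfun_mul_Vfun_sub_one_pos hY hβ₃X
  have hV₀ : Vfun φ β₁ ≠ 0 := right_ne_zero_of_mul (one_pos.trans (sub_pos.1 hR)).ne'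
  have hV₁ : Vfun φ β₁ ≠ 1 := by
    rw [← sub_ne_zero, Vfun_sub_one]
    positivity
  exact ⟨hR, logDeriv_sub_logDeriv_of_eq_neg_logDeriv_sub_one_mul hV₀ hV₁
    (logDeriv_Ufun_eq_neg_logDeriv_Vfun_sub_one_mul hφ hX hβ₂ hβ₃ hY)⟩

theorem lt_one_of_mem_Dset (hD : (φ, β₁) ∈ Dset) : φ < 1 :=
  hD.2.1.trans_lt (by norm_num)

theorem beta₂_pos_of_mem_Dset (hD : (φ, β₁) ∈ Dset) : 0 < beta₂ φ β₁ :=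
  lt_of_lt_of_le (by norm_num) hD.2.2.2.2.1

theorem beta₃_pos_of_mem_Dset (hD : (φ, β₁) ∈ Dset) : 0 < beta₃ φ β₁ :=
  lt_of_lt_of_le (by norm_num) hD.2.2.2.2.2.2.1

theorem Xfun_pos_of_mem_Dset (hD : (φ, β₁) ∈ Dset) : 0 < Xfun φ := by
  have hβ₂ := beta₂_pos_of_mem_Dset hD
  have hβ₃ := beta₃_pos_of_mem_Dset hD
  rw [Xfun_eq_beta φ β₁]
  positivity

theorem Yfun_pos_of_mem_Dset (hD : (φ, β₁) ∈ Dset) : 0 < Yfun φ β₁ := by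
  have hβ₂ := beta₂_pos_of_mem_Dset hD
  have hβ₃ := beta₃_pos_of_mem_Dset hD
  rw [Yfun_eq_beta]
  positivity

end Identity

/-- logarithmic derivative identity at fixed `φ`.  For `(φ, β₁) ∈ D`,
with `u(t) = U(φ,t)`, `v(t) = V(φ,t)`, `X = 3φ − 1`, `Y = 3φ − β₁` and
`R = (Y/X)·V(φ,β₁) − 1`, one has `R > 0` and
`u′/u − v′/v = (−v′/(v(v−1)))·R` at `β₁`. -/
theorem log_deriv_identity_fixed_phi (φ β₁ : ℝ) (hD : (φ, β₁) ∈ Dset) :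
    0 < (3 * φ - β₁) / (3 * φ - 1) * Vfun φ β₁ - 1 ∧
      deriv (fun t => Ufun φ t) β₁ / Ufun φ β₁ - deriv (fun t => Vfun φ t) β₁ / Vfun φ β₁ =
        -(deriv (fun t => Vfun φ t) β₁) / (Vfun φ β₁ * (Vfun φ β₁ - 1)) *
          ((3 * φ - β₁) / (3 * φ - 1) * Vfun φ β₁ - 1) :=
  log_deriv_identity_fixed_phi_general (lt_one_of_mem_Dset hD).ne (beta₂_pos_of_mem_Dset hD).ne'
    (Yfun_pos_of_mem_Dset hD).ne' (mul_pos (beta₃_pos_of_mem_Dset hD) (Xfun_pos_of_mem_Dset hD))
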